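/- arXiv:2009.02730 — 7 statements merged into one kernel-verified Lean document; each statement's English description precedes it below -/
import Mathlib

section
/- Define F : ℝ² → ℝ by F(η,δ) = (1 + η·(2π − δ))·(η − sin δ) − η·cos δ. Then F(0,0) = 0, the partial derivative ∂F/∂δ(0,0) = −1 ≠ 0, and there exist ε > 0 and a twice continuously differentiable function δ : (−ε,ε) → ℝ with δ(0) = 0 and F(η, δ(η)) = 0 for all |η| < ε, which moreover satisfies δ'(0) = 0 and δ''(0) = 4π; consequently δ(η) = 2π·η² + o(η²) as η → 0. -/
open Real Filter Asymptotics

/-- For `F(η,δ) = (1 + η(2π − δ))(η − sin δ) − η cos δ` one has `F(0,0) = 0`,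
`∂F/∂δ(0,0) = −1 ≠ 0`, and there exist `ε > 0` and a `C²` function
`δ : (−ε,ε) → ℝ` with `δ(0) = 0`, `F(η, δ(η)) = 0` for `|η| < ε`, `δ'(0) = 0`
and `δ''(0) = 4π`; consequently `δ(η) = 2πη² + o(η²)` as `η → 0`. -/
theorem implicit_function_previous_coil (F : ℝ × ℝ → ℝ)
    (hF : ∀ η δ : ℝ, F (η, δ) = (1 + η * (2 * π - δ)) * (η - Real.sin δ)
      - η * Real.cos δ) :
    F (0, 0) = 0 ∧
    deriv (fun δ : ℝ => F (0, δ)) 0 = -1 ∧ deriv (fun δ : ℝ => F (0, δ)) 0 ≠ 0 ∧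
    ∃ ε : ℝ, 0 < ε ∧ ∃ g : ℝ → ℝ,
      ContDiffOn ℝ 2 g (Set.Ioo (-ε) ε) ∧
      g 0 = 0 ∧
      (∀ η : ℝ, |η| < ε → F (η, g η) = 0) ∧
      deriv g 0 = 0 ∧
      deriv (deriv g) 0 = 4 * π ∧
      (fun η : ℝ => g η - 2 * π * η ^ 2) =o[nhds 0] fun η : ℝ => η ^ 2 := by
  have hd : HasDerivAt (fun δ : ℝ => F (0, δ)) (-1) 0 := by
    have : (fun δ : ℝ => F (0, δ)) = fun δ => - Real.sin δ := by
      funext δ; rw [hF]; ring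
    rw [this]
    exact (Real.hasDerivAt_sin 0).neg.congr_deriv (by simp)
  have h00 : F (0, 0) = 0 := by rw [hF]; simp
  refine ⟨h00, hd.deriv, by rw [hd.deriv]; norm_num, ?_⟩
  have hFe : F = fun p : ℝ × ℝ => (1 + p.1 * (2 * π - p.2)) * (p.1 - Real.sin p.2)
      - p.1 * Real.cos p.2 := by
    funext p; exact hF p.1 p.2
  have cdf : ContDiffAt ℝ 2 F ((0 : ℝ), (0 : ℝ)) := by
    rw [hFe]
    have := (Real.contDiff_sin (n := 2)).comp (contDiff_snd (𝕜 := ℝ) (E := ℝ) (F := ℝ))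
    have := (Real.contDiff_cos (n := 2)).comp (contDiff_snd (𝕜 := ℝ) (E := ℝ) (F := ℝ))
    fun_prop
  have if₂ : (fderiv ℝ F ((0 : ℝ), (0 : ℝ)) ∘L .inr ℝ ℝ ℝ).IsInvertible := by
    have h1 : HasFDerivAt (fun δ : ℝ => F (0, δ))
        (fderiv ℝ F ((0 : ℝ), (0 : ℝ)) ∘L .inr ℝ ℝ ℝ) 0 :=
      (cdf.differentiableAt (by norm_num)).hasFDerivAt.comp (0 : ℝ)
        (hasFDerivAt_prodMk_right (0 : ℝ) (0 : ℝ))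
    rw [h1.unique hd.hasFDerivAt]
    refine ⟨ContinuousLinearEquiv.neg ℝ, ?_⟩
    ext
    simp
  have h2 : (2 : WithTop ℕ∞) ≠ 0 := by norm_num
  obtain ⟨g, hg0, hgF, hgc⟩ : ∃ g : ℝ → ℝ, g 0 = 0 ∧
      (∀ᶠ x in nhds (0 : ℝ), F (x, g x) = 0) ∧ ContDiffAt ℝ 2 g 0 :=
    ⟨cdf.implicitFunction h2 if₂, cdf.implicitFunction_apply_self h2 if₂,
      by simpa [h00] using cdf.eventually_apply_implicitFunction h2 if₂,
      cdf.contDiffAt_implicitFunction h2 if₂⟩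
  have hev := hgF.and (hgc.eventually (by simp))
  obtain ⟨ε, hε, hball⟩ := Metric.eventually_nhds_iff.1 hev
  have hb : ∀ x ∈ Set.Ioo (-ε) ε, F (x, g x) = 0 ∧ ContDiffAt ℝ 2 g x := by
    intro x hx
    apply hball
    rw [Real.dist_eq, sub_zero]
    exact abs_lt.2 hx
  have hmem : Set.Ioo (-ε) ε ∈ nhds (0 : ℝ) := Ioo_mem_nhds (by linarith) hε
  have hder : ∀ x ∈ Set.Ioo (-ε) ε, HasDerivAt g (deriv g x) x := fun x hx =>
    ((hb x hx).2.differentiableAt h2).hasDerivAt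
  have hcd : ContDiffOn ℝ 2 g (Set.Ioo (-ε) ε) := fun x hx => (hb x hx).2.contDiffWithinAt
  have hz : (0 : ℝ) ∈ Set.Ioo (-ε) ε := ⟨by linarith, hε⟩
  have heq : ∀ x ∈ Set.Ioo (-ε) ε,
      (2 * π - g x - x * deriv g x) * (x - Real.sin (g x))
        + (1 + x * (2 * π - g x)) * (1 - Real.cos (g x) * deriv g x)
        - Real.cos (g x) + x * (Real.sin (g x) * deriv g x) = 0 := by
    intro x hx
    have hgx := hder x hx
    have hid := hasDerivAt_id' x
    have H := (((hid.mul (hgx.const_sub (2 * π))).const_add 1).mul (hid.sub hgx.sin)).sub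
      (hid.mul hgx.cos)
    have H0 := (hasDerivAt_const x (0 : ℝ)).congr_of_eventuallyEq (f₁ := fun y => F (y, g y))
      (by filter_upwards [Ioo_mem_nhds hx.1 hx.2] with y hy using (hb y hy).1)
    simp only [hF] at H0
    have := H.unique H0
    simp only [Pi.mul_apply, Pi.sub_apply] at this
    linarith
  have hg1 : deriv g 0 = 0 := by
    have := heq 0 hz
    simp [hg0] at this
    linarith
  have hdd : DifferentiableAt ℝ (deriv g) 0 := by
    have h3 : ContDiffOn ℝ 1 (deriv g) (Set.Ioo (-ε) ε) :=
      hcd.deriv_of_isOpen isOpen_Ioo (by norm_num)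
    exact (h3.contDiffAt hmem).differentiableAt (by norm_num)
  have hg2 : deriv (deriv g) 0 = 4 * π := by
    have hgx := hder 0 hz
    have hD := hdd.hasDerivAt
    have hid := hasDerivAt_id' (0 : ℝ)
    have H := ((((((hgx.const_sub (2 * π)).sub (hid.mul hD)).mul (hid.sub hgx.sin)).add
      (((hid.mul (hgx.const_sub (2 * π))).const_add 1).mul
        ((hgx.cos.mul hD).const_sub 1))).sub hgx.cos).add (hid.mul (hgx.sin.mul hD)))
    have H0 := (hasDerivAt_const (0 : ℝ) (0 : ℝ)).congr_of_eventuallyEq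
      (by filter_upwards [hmem] with y hy using heq y hy)
    have := H.unique H0
    simp [hg0, hg1] at this
    linarith
  refine ⟨ε, hε, g, hcd, hg0, fun x hx => (hb x (abs_lt.1 hx)).1, hg1, hg2, ?_⟩
  have hl : (fun x => deriv g x - 4 * π * x) =o[nhdsWithin 0 (Set.Ioo (-ε) ε)]
      fun x : ℝ => (x - 0) ^ 1 := by
    have := (hasDerivAt_iff_isLittleO.1 hdd.hasDerivAt)
    rw [hg1, hg2] at this
    refine (this.mono nhdsWithin_le_nhds).congr (fun x => ?_) (fun x => ?_)
    · simp [mul_comm]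
    · simp
  have hfin := Convex.isLittleO_pow_succ_real (f := fun x => g x - 2 * π * x ^ 2)
    (convex_Ioo (-ε) ε) hz (fun x hx => by
      have := ((hder x hx).sub (((hasDerivAt_id' x).pow 2).const_mul (2 * π)))
      refine (this.congr_deriv ?_).hasDerivWithinAt
      simp; ring) hl
  rw [nhdsWithin_eq_nhds.2 hmem] at hfin
  simpa [hg0] using hfin
end

section
/- Let a > 0 and let g : (θ₀, ∞) → ℝ be a function satisfying g(θ) = θ − 2π + 2π·θ^{-2} + O(θ^{-3}) as θ → ∞. Then for all sufficiently large θ the quantity a²θ⁴/(1+θ²) − a²·(θ² − g(θ)²) is positive, and the function d(θ) := aθ²/√(1+θ²) − √( a²θ⁴/(1+θ²) − a²·(θ² − g(θ)²) ) satisfies d(θ) = (2πaθ/√(1+θ²))·(1 + O(θ^{-1})) as θ → ∞; in particular d(θ) = 2πa + O(θ^{-1}). -/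
open Real Filter Asymptotics

set_option maxHeartbeats 2000000 in
/-- Let `a > 0` and `g(θ) = θ − 2π + 2πθ⁻² + O(θ⁻³)` as `θ → ∞`. Then eventually
`a²θ⁴/(1+θ²) − a²(θ² − g(θ)²) > 0`, and
`d(θ) := aθ²/√(1+θ²) − √(a²θ⁴/(1+θ²) − a²(θ² − g(θ)²))` satisfies
`d(θ) = (2πaθ/√(1+θ²))(1 + O(θ⁻¹))`; in particular `d(θ) = 2πa + O(θ⁻¹)`. -/
theorem archimedean_width_asymptotics (a : ℝ) (ha : 0 < a) (g : ℝ → ℝ)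
    (hg : (fun θ : ℝ => g θ - (θ - 2 * π + 2 * π / θ ^ 2)) =O[atTop]
      fun θ : ℝ => 1 / θ ^ 3)
    (d : ℝ → ℝ)
    (hd : ∀ θ : ℝ, d θ = a * θ ^ 2 / Real.sqrt (1 + θ ^ 2)
      - Real.sqrt (a ^ 2 * θ ^ 4 / (1 + θ ^ 2) - a ^ 2 * (θ ^ 2 - (g θ) ^ 2))) :
    (∀ᶠ θ : ℝ in atTop,
      0 < a ^ 2 * θ ^ 4 / (1 + θ ^ 2) - a ^ 2 * (θ ^ 2 - (g θ) ^ 2)) ∧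
    (fun θ : ℝ => d θ / (2 * π * a * θ / Real.sqrt (1 + θ ^ 2)) - 1) =O[atTop]
      (fun θ : ℝ => 1 / θ) ∧
    (fun θ : ℝ => d θ - 2 * π * a) =O[atTop] fun θ : ℝ => 1 / θ := by
  obtain ⟨C, hC⟩ := hg.bound
  have key : ∀ᶠ θ : ℝ in atTop,
      0 < a ^ 2 * θ ^ 4 / (1 + θ ^ 2) - a ^ 2 * (θ ^ 2 - (g θ) ^ 2) ∧
      |d θ - 2 * π * a| ≤ a * (11 + |C|) * (1 / θ) := by
    filter_upwards [hC, eventually_ge_atTop (100 + 2 * |C|)] with θ h1 h2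
    have hC0 := abs_nonneg C
    have hθ : 0 < θ := by linarith
    have hθ1 : 1 ≤ θ := by linarith
    have hi : 0 < 1 / θ := by positivity
    have hi1 : 1 / θ ≤ 1 := by rw [div_le_one hθ]; exact hθ1
    have hti : θ * (1 / θ) = 1 := by field_simp
    have hpi := Real.pi_pos
    have hpi2 := Real.pi_lt_d2
    rw [Real.norm_eq_abs, Real.norm_eq_abs] at h1
    set i := 1 / θ with hidef
    have e3 : 1 / θ ^ 3 = i ^ 3 := by rw [hidef]; field_simp
    have e2 : 2 * π / θ ^ 2 = 2 * π * i ^ 2 := by rw [hidef]; field_simp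
    rw [e3, e2, abs_of_pos (pow_pos hi 3)] at h1
    have i2 : i ^ 2 ≤ i := by nlinarith
    have i3 : i ^ 3 ≤ i := by nlinarith
    have h1' : C * i ^ 3 ≤ |C| * i :=
      mul_le_mul (le_abs_self C) i3 (by positivity) hC0
    have hp : 2 * π * i ^ 2 ≤ 7 * i := by nlinarith [sq_nonneg i]
    have hp0 : 0 ≤ 2 * π * i ^ 2 := by positivity
    have hg2 := abs_le.mp (h1.trans h1')
    have hCi : |C| * i ≤ |C| := by nlinarith
    have hgl : θ / 2 + 1 ≤ g θ := by linarith [hg2.1]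
    have hs0 : 0 < 1 + θ ^ 2 := by positivity
    obtain ⟨c, hc⟩ : ∃ c, c = θ ^ 2 / (1 + θ ^ 2) := ⟨_, rfl⟩
    have hc0 : 0 ≤ c := by rw [hc]; positivity
    have hc1 : c ≤ 1 := by rw [hc, div_le_one hs0]; linarith
    have hQ : a ^ 2 * θ ^ 4 / (1 + θ ^ 2) - a ^ 2 * (θ ^ 2 - (g θ) ^ 2)
        = a ^ 2 * (g θ ^ 2 - c) := by rw [hc]; field_simp; ring
    have hpos : 0 < a ^ 2 * (g θ ^ 2 - c) := by
      apply mul_pos (by positivity); nlinarith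
    refine ⟨hQ ▸ hpos, ?_⟩
    rw [hd, hQ, Real.sqrt_mul (by positivity), Real.sqrt_sq ha.le]
    have r1 : √(g θ ^ 2 - c) ≤ g θ := by
      apply Real.sqrt_le_iff.mpr; constructor <;> linarith
    have r2 : g θ - 2 * i ≤ √(g θ ^ 2 - c) := by
      apply Real.le_sqrt_of_sq_le
      have : i * (θ / 2 + 1) ≤ i * g θ := mul_le_mul_of_nonneg_left hgl hi.le
      nlinarith
    have hs1 : θ ≤ √(1 + θ ^ 2) := Real.le_sqrt_of_sq_le (by linarith)
    have hs2 : √(1 + θ ^ 2) ≤ θ + i := by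
      apply Real.sqrt_le_iff.mpr; constructor
      · positivity
      · nlinarith [sq_nonneg i]
    have hsp : 0 < √(1 + θ ^ 2) := by linarith
    have t1 : θ ^ 2 / √(1 + θ ^ 2) ≤ θ := by
      rw [div_le_iff₀ hsp]; nlinarith
    have t2 : θ - i ≤ θ ^ 2 / √(1 + θ ^ 2) := by
      rw [le_div_iff₀ hsp]
      have : (θ - i) * √(1 + θ ^ 2) ≤ (θ - i) * (θ + i) :=
        mul_le_mul_of_nonneg_left hs2 (by linarith)
      have e' : (θ - i) * (θ + i) = θ ^ 2 - i ^ 2 := by ring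
      linarith [sq_nonneg i]
    have e : a * θ ^ 2 / √(1 + θ ^ 2) - a * √(g θ ^ 2 - c) - 2 * π * a
        = a * (θ ^ 2 / √(1 + θ ^ 2) - √(g θ ^ 2 - c) - 2 * π) := by ring
    rw [e, abs_mul, abs_of_pos ha, mul_assoc]
    apply mul_le_mul_of_nonneg_left _ ha.le
    rw [abs_le]
    constructor <;> linarith [hg2.1, hg2.2]
  refine ⟨key.mono fun _ h => h.1, ?_, ?_⟩
  · apply IsBigO.of_bound ((a * (11 + |C|) * 2 + 2 * π * a) / (2 * π * a))
    filter_upwards [key, eventually_ge_atTop 1] with θ h hθ1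
    have hθ : 0 < θ := by linarith
    have hi : 0 < 1 / θ := by positivity
    have hi1 : 1 / θ ≤ 1 := by rw [div_le_one hθ]; exact hθ1
    have hsp : 0 < √(1 + θ ^ 2) := Real.sqrt_pos.mpr (by positivity)
    have hpa : 0 < 2 * π * a := by have := Real.pi_pos; positivity
    obtain ⟨q, hq⟩ : ∃ q, q = √(1 + θ ^ 2) / θ := ⟨_, rfl⟩
    have hq1 : 1 ≤ q := by
      rw [hq, le_div_iff₀ hθ]; exact Real.le_sqrt_of_sq_le (by linarith)
    have hq2 : q ≤ 1 + 1 / θ := by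
      rw [hq, div_le_iff₀ hθ]
      have : (1 + 1 / θ) * θ = θ + 1 := by field_simp
      rw [this]
      apply Real.sqrt_le_iff.mpr; constructor
      · positivity
      · nlinarith
    have e : d θ / (2 * π * a * θ / √(1 + θ ^ 2)) - 1
        = ((d θ - 2 * π * a) * q + 2 * π * a * (q - 1)) / (2 * π * a) := by
      rw [hq]; have := Real.pi_pos; field_simp; ring
    rw [e, Real.norm_eq_abs, Real.norm_eq_abs, abs_of_pos hi, abs_div, abs_of_pos hpa,
      div_mul_eq_mul_div]
    apply div_le_div_of_nonneg_right _ hpa.le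
    refine (abs_add_le _ _).trans ?_
    rw [abs_mul, abs_mul, abs_of_pos hpa, abs_of_pos (by linarith : 0 < q),
      abs_of_nonneg (by linarith : 0 ≤ q - 1)]
    have b1 : |d θ - 2 * π * a| * q ≤ (a * (11 + |C|) * (1 / θ)) * 2 :=
      mul_le_mul h.2 (by linarith) (by linarith) ((abs_nonneg _).trans h.2)
    have b2 : 2 * π * a * (q - 1) ≤ 2 * π * a * (1 / θ) :=
      mul_le_mul_of_nonneg_left (by linarith) hpa.le
    linarith
  · apply IsBigO.of_bound (a * (11 + |C|))
    filter_upwards [key, eventually_gt_atTop 0] with θ h hθ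
    rw [Real.norm_eq_abs, Real.norm_eq_abs, abs_of_pos (by positivity : 0 < 1 / θ)]
    exact h.2
end

section
/- Let c < d be real numbers and let f : [c,d] → ℝ be continuously differentiable with f(c) = 0. Then ∫_c^d f'(x)² dx ≥ (π/(2(d−c)))² · ∫_c^d f(x)² dx. -/
open Real intervalIntegral

lemma poincare_aux (c d : ℝ) (hcd : c < d) (f f' : ℝ → ℝ)
    (hderiv : ∀ x ∈ Set.Icc c d, HasDerivAt f (f' x) x)
    (hf'cont : ContinuousOn f' (Set.Icc c d))
    (hfc : f c = 0) (k : ℝ) (hk0 : 0 < k) (hk : k < π / (2 * (d - c))) :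
    k ^ 2 * (∫ x in c..d, (f x) ^ 2) ≤ ∫ x in c..d, (f' x) ^ 2 := by
  have hL : 0 < d - c := sub_pos.2 hcd
  have hkL : k * (d - c) < π / 2 := by
    rw [lt_div_iff₀ (by positivity)] at hk
    linarith
  have hcos : ∀ x ∈ Set.Icc c d, cos (k * (d - x)) ≠ 0 := by
    intro x hx
    apply ne_of_gt
    apply cos_pos_of_mem_Ioo
    have h1 : 0 ≤ k * (d - x) := mul_nonneg hk0.le (by linarith [hx.2])
    have h2 : k * (d - x) ≤ k * (d - c) := mul_le_mul_of_nonneg_left (by linarith [hx.1]) hk0.le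
    constructor <;> linarith [pi_pos]
  have hfcont : ContinuousOn f (Set.Icc c d) := HasDerivAt.continuousOn hderiv
  have hw : ∀ x ∈ Set.Icc c d, HasDerivAt (fun x => k * tan (k * (d - x)))
      (-k ^ 2 - (k * tan (k * (d - x))) ^ 2) x := by
    intro x hx
    have h1 : HasDerivAt (fun x => k * (d - x)) (k * (-1)) x :=
      ((hasDerivAt_id x).const_sub d).const_mul k
    have h2 := ((hasDerivAt_tan (hcos x hx)).comp x h1).const_mul k
    refine h2.congr_deriv ?_
    have h3 := hcos x hx
    rw [tan_eq_sin_div_cos]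
    field_simp
    linear_combination (sin_sq_add_cos_sq (k * (d - x)))
  have hwc : ContinuousOn (fun x => k * tan (k * (d - x))) (Set.Icc c d) :=
    HasDerivAt.continuousOn hw
  set w : ℝ → ℝ := fun x => k * tan (k * (d - x)) with hwdef
  have hg : ∀ x ∈ Set.uIcc c d, HasDerivAt (fun x => w x * f x ^ 2)
      ((-k ^ 2 - w x ^ 2) * f x ^ 2 + w x * (2 * f x * f' x)) x := by
    intro x hx
    rw [Set.uIcc_of_le hcd.le] at hx
    refine ((hw x hx).mul ((hderiv x hx).pow 2)).congr_deriv ?_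
    simp [hwdef]
  have hint : IntervalIntegrable
      (fun x => (-k ^ 2 - w x ^ 2) * f x ^ 2 + w x * (2 * f x * f' x)) MeasureTheory.volume c d := by
    apply ContinuousOn.intervalIntegrable_of_Icc hcd.le
    fun_prop
  have hi1 : IntervalIntegrable (fun x => f' x ^ 2) MeasureTheory.volume c d :=
    ContinuousOn.intervalIntegrable_of_Icc hcd.le (by fun_prop)
  have hi2 : IntervalIntegrable (fun x => k ^ 2 * f x ^ 2) MeasureTheory.volume c d :=
    ContinuousOn.intervalIntegrable_of_Icc hcd.le (by fun_prop)
  have hF := integral_eq_sub_of_hasDerivAt hg hint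
  have hz : w d * f d ^ 2 - w c * f c ^ 2 = 0 := by simp [hwdef, hfc]
  have hm := integral_mono_on hcd.le hint (hi1.sub hi2) (fun x _ => by
    nlinarith [sq_nonneg (f' x - w x * f x)])
  rw [hF, hz, integral_sub hi1 hi2, integral_const_mul] at hm
  linarith

/-- One-sided Poincaré inequality: if `f` is continuously differentiable on `[c,d]`
with `f(c) = 0`, then `∫_c^d f'(x)² dx ≥ (π/(2(d−c)))² ∫_c^d f(x)² dx`. -/
theorem poincare_dirichlet_one_endpoint (c d : ℝ) (hcd : c < d) (f f' : ℝ → ℝ)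
    (hderiv : ∀ x ∈ Set.Icc c d, HasDerivAt f (f' x) x)
    (hf'cont : ContinuousOn f' (Set.Icc c d))
    (hfc : f c = 0) :
    (∫ x in c..d, (f' x) ^ 2) ≥ (π / (2 * (d - c))) ^ 2 * ∫ x in c..d, (f x) ^ 2 := by
  have hK : 0 < π / (2 * (d - c)) := div_pos pi_pos (by linarith)
  have ht : Filter.Tendsto (fun k : ℝ => k ^ 2 * ∫ x in c..d, (f x) ^ 2)
      (nhdsWithin (π / (2 * (d - c))) (Set.Iio (π / (2 * (d - c)))))
      (nhds ((π / (2 * (d - c))) ^ 2 * ∫ x in c..d, (f x) ^ 2)) :=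
    ((continuous_id.pow 2).mul continuous_const).continuousAt.tendsto.mono_left nhdsWithin_le_nhds
  refine le_of_tendsto ht ?_
  filter_upwards [Ioo_mem_nhdsLT hK] with k hk
  exact poincare_aux c d hcd f f' hderiv hf'cont hfc k hk.1 hk.2
end

section
/- Let 0 ≤ α < β and let ψ : [α,β] → ℝ be continuously differentiable with ψ(α) = 0 and ψ(β) = 0. Then ∫_α^β r·ψ'(r)² dr ≥ ∫_α^β ( (π/(β−α))²·r − 1/(4r) )·ψ(r)² dr, where in the case α = 0 the right-hand integrand is integrable because ψ vanishes at 0. -/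
open Real MeasureTheory intervalIntegral

lemma aux_cont (f s : ℝ → ℝ) (x d e : ℝ) (hf : HasDerivAt f d x) (hs : HasDerivAt s e x)
    (hfx : f x = 0) (hsx : s x = 0) (he : e ≠ 0) : ContinuousAt (fun r => f r ^ 2 / s r) x := by
  rw [continuousAt_iff_punctured_nhds]
  have h1 := hasDerivAt_iff_tendsto_slope.1 hf
  have h2 := hasDerivAt_iff_tendsto_slope.1 hs
  have h3 : Filter.Tendsto f (nhdsWithin x {x}ᶜ) (nhds (f x)) :=
    hf.continuousAt.tendsto.mono_left nhdsWithin_le_nhds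
  have h4 := (h1.div h2 he).mul h3
  simp only [hfx, hsx, mul_zero] at h4 ⊢
  norm_num
  refine h4.congr' ?_
  filter_upwards [self_mem_nhdsWithin] with r hr
  have : r - x ≠ 0 := sub_ne_zero.2 hr
  simp only [slope_def_field, hfx, hsx, sub_zero, Pi.div_apply]
  rw [div_div_div_cancel_right₀ this]
  ring

/-- Weighted radial inequality: for `0 ≤ α < β` and `ψ` continuously differentiable on
`[α,β]` with `ψ(α) = ψ(β) = 0`, the right-hand integrand is integrable and
`∫_α^β r ψ'(r)² dr ≥ ∫_α^β ((π/(β−α))² r − 1/(4r)) ψ(r)² dr`. -/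
theorem weighted_radial_inequality (α β : ℝ) (hα : 0 ≤ α) (hαβ : α < β)
    (ψ ψ' : ℝ → ℝ)
    (hderiv : ∀ x ∈ Set.Icc α β, HasDerivAt ψ (ψ' x) x)
    (hψ'cont : ContinuousOn ψ' (Set.Icc α β))
    (hψα : ψ α = 0) (hψβ : ψ β = 0) :
    IntervalIntegrable
      (fun r : ℝ => ((π / (β - α)) ^ 2 * r - 1 / (4 * r)) * (ψ r) ^ 2) volume α β ∧
    (∫ r in α..β, r * (ψ' r) ^ 2) ≥
      ∫ r in α..β, ((π / (β - α)) ^ 2 * r - 1 / (4 * r)) * (ψ r) ^ 2 := by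
  have hba : 0 < β - α := sub_pos.2 hαβ
  set c := π / (β - α) with hc
  have hc0 : 0 < c := div_pos pi_pos hba
  have hcβ : c * (β - α) = π := by rw [hc]; field_simp
  have hψc : ContinuousOn ψ (Set.Icc α β) := fun x hx =>
    (hderiv x hx).continuousAt.continuousWithinAt
  have hq : ContinuousOn (fun r => ψ r ^ 2 / (4 * r)) (Set.Icc α β) := by
    intro x hx
    apply ContinuousAt.continuousWithinAt
    rcases eq_or_ne x 0 with h0 | h0
    · have hxα : x = α := le_antisymm (h0 ▸ hα) hx.1
      refine aux_cont ψ (fun r => 4 * r) x (ψ' x) 4 (hderiv x hx) ?_ (by rw [hxα, hψα])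
        (by simp [h0]) (by norm_num)
      simpa using (hasDerivAt_id x).const_mul (4 : ℝ)
    · exact ((hderiv x hx).continuousAt.pow 2).div (by fun_prop) (by positivity)
  have hRc : ContinuousOn (fun r : ℝ => (c ^ 2 * r - 1 / (4 * r)) * (ψ r) ^ 2)
      (Set.Icc α β) := by
    have : ContinuousOn (fun r : ℝ => c ^ 2 * r * ψ r ^ 2 - ψ r ^ 2 / (4 * r))
      (Set.Icc α β) := ContinuousOn.sub (by fun_prop) hq
    refine this.congr fun r _ => ?_
    ring
  have hLc : ContinuousOn (fun r : ℝ => r * (ψ' r) ^ 2) (Set.Icc α β) := by fun_prop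
  have hRi := hRc.intervalIntegrable_of_Icc hαβ.le (μ := volume)
  have hLi := hLc.intervalIntegrable_of_Icc hαβ.le (μ := volume)
  refine ⟨hRi, ?_⟩
  have hsd : ∀ x, HasDerivAt (fun r => sin (c * (r - α))) (c * cos (c * (x - α))) x := by
    intro x
    have := (((hasDerivAt_id x).sub_const α).const_mul c).sin
    simpa [mul_comm] using this
  have hcd : ∀ x, HasDerivAt (fun r => cos (c * (r - α))) (-(c * sin (c * (x - α)))) x := by
    intro x
    have := (((hasDerivAt_id x).sub_const α).const_mul c).cos
    simpa [mul_comm] using this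
  have hpos : ∀ x ∈ Set.Ioo α β, 0 < sin (c * (x - α)) := by
    intro x hx
    apply sin_pos_of_pos_of_lt_pi
    · exact mul_pos hc0 (sub_pos.2 hx.1)
    · rw [← hcβ]; exact mul_lt_mul_of_pos_left (by linarith [hx.2]) hc0
  have hG1 : ContinuousOn (fun r => ψ r ^ 2 / sin (c * (r - α))) (Set.Icc α β) := by
    intro x hx
    apply ContinuousAt.continuousWithinAt
    rcases eq_or_ne x α with h0 | h0
    · refine aux_cont ψ _ x _ _ (hderiv x hx) (hsd x) (by rw [h0, hψα]) (by simp [h0]) ?_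
      simp [h0, hc0.ne']
    rcases eq_or_ne x β with h1 | h1
    · refine aux_cont ψ _ x _ _ (hderiv x hx) (hsd x) (by rw [h1, hψβ]) (by simp [h1, hcβ]) ?_
      simp [h1, hcβ, hc0.ne']
    · exact ((hderiv x hx).continuousAt.pow 2).div (hsd x).continuousAt
        (hpos x ⟨lt_of_le_of_ne hx.1 h0.symm, lt_of_le_of_ne hx.2 h1⟩).ne'
  have hGc : ContinuousOn (fun r => c * r * cos (c * (r - α)) * (ψ r ^ 2 / sin (c * (r - α)))
      - ψ r ^ 2 / 2) (Set.Icc α β) := by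
    apply ContinuousOn.sub
    · exact ContinuousOn.mul (by fun_prop) hG1
    · fun_prop
  have hψ2 : ∀ x ∈ Set.Ioo α β, HasDerivAt (fun r => ψ r ^ 2) (2 * ψ x * ψ' x) x := by
    intro x hx
    simpa using (hderiv x ⟨hx.1.le, hx.2.le⟩).fun_pow 2
  have key := sub_le_integral_of_hasDeriv_right_of_le hαβ.le hGc
    (fun x hx => (((((hasDerivAt_id' x).const_mul c).mul (hcd x)).mul
      ((hψ2 x hx).div (hsd x) (hpos x hx).ne')).sub ((hψ2 x hx).div_const 2)).hasDerivWithinAt)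
    ((hLc.sub hRc).integrableOn_Icc (μ := volume)) (by
      intro x hx
      have hs := hpos x hx
      have hx0 : 0 < x := lt_of_le_of_lt hα hx.1
      have hsc := sin_sq_add_cos_sq (c * (x - α))
      simp only [Pi.sub_apply, Pi.mul_apply, Pi.div_apply]
      generalize sin (c * (x - α)) = S at *
      generalize cos (c * (x - α)) = C at *
      rw [← sub_nonneg]
      have : 0 ≤ x * (ψ' x + (1 / (2 * x) - c * C / S) * ψ x) ^ 2 := by positivity
      refine this.trans_eq ?_
      have hC : C ^ 2 = 1 - S ^ 2 := by linarith
      field_simp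
      ring_nf
      try simp only [hC]
      try ring_nf)
  simp only [hψα, hψβ, Pi.sub_apply] at key
  rw [intervalIntegral.integral_sub hLi hRi] at key
  have h0 : ∀ a b : ℝ, a * ((0:ℝ) ^ 2 / b) - 0 ^ 2 / 2 = 0 := by intro a b; simp
  rw [h0, h0] at key
  linarith
end

section
/- Let a > 0 and 0 < L ≤ πa. Let ψ : [0,L] → ℝ be continuously differentiable with ψ(L) = 0, and assume that r ↦ ψ(r)²/r is integrable on (0,L). Then ∫_0^L [ r·ψ'(r)² + ( 1/(4r) − r/(4a²) )·ψ(r)² ] dr ≥ 0. -/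
open Real MeasureTheory intervalIntegral

/-- Nonnegativity of the angular sections of the shifted quadratic form for the
Archimedean spiral region at small angles: for `a > 0`, `0 < L ≤ πa`, and `ψ`
continuously differentiable on `[0,L]` with `ψ(L) = 0` and `r ↦ ψ(r)²/r` integrable
on `(0,L)`, one has `∫_0^L [ r ψ'(r)² + (1/(4r) − r/(4a²)) ψ(r)² ] dr ≥ 0`. -/
theorem angular_section_nonneg (a L : ℝ) (ha : 0 < a) (hL : 0 < L)
    (hLa : L ≤ π * a) (ψ ψ' : ℝ → ℝ)
    (hderiv : ∀ x ∈ Set.Icc 0 L, HasDerivAt ψ (ψ' x) x)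
    (hψ'cont : ContinuousOn ψ' (Set.Icc 0 L))
    (hψL : ψ L = 0)
    (hint : IntegrableOn (fun r : ℝ => (ψ r) ^ 2 / r) (Set.Ioo 0 L)) :
    (∫ r in (0:ℝ)..L,
      (r * (ψ' r) ^ 2 + (1 / (4 * r) - r / (4 * a ^ 2)) * (ψ r) ^ 2)) ≥ 0 := by
  by_cases hg : IntervalIntegrable (fun r : ℝ =>
      r * (ψ' r) ^ 2 + (1 / (4 * r) - r / (4 * a ^ 2)) * (ψ r) ^ 2) volume 0 L
  swap
  · rw [intervalIntegral.integral_undef hg]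
  obtain ⟨k, hk⟩ : ∃ k : ℝ, k = 1 / (2 * a) := ⟨_, rfl⟩
  have hk0 : 0 < k := by rw [hk]; positivity
  have hkL : k * L ≤ π / 2 := by
    rw [hk, div_mul_eq_mul_div, div_le_iff₀ (by positivity)]
    linarith
  obtain ⟨w, hw⟩ : ∃ w : ℝ → ℝ, w = fun r => -k * tan (k * (r - L / 2)) := ⟨_, rfl⟩
  have hwd : ∀ x ∈ Set.Icc 0 L, HasDerivAt w (-k ^ 2 - (w x) ^ 2) x := by
    intro x hx
    have hc : cos (k * (x - L / 2)) ≠ 0 := by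
      apply ne_of_gt
      apply cos_pos_of_mem_Ioo
      have h1 : k * x ≤ k * L := mul_le_mul_of_nonneg_left hx.2 hk0.le
      have h2 : 0 ≤ k * x := mul_nonneg hk0.le hx.1
      constructor <;> nlinarith [pi_pos]
    have hin : HasDerivAt (fun r : ℝ => k * (r - L / 2)) k x := by
      simpa using ((hasDerivAt_id x).sub_const (L / 2)).const_mul k
    have h := ((hasDerivAt_tan hc).comp x hin).const_mul (-k)
    rw [hw]
    refine h.congr_deriv ?_
    have hs := sin_sq_add_cos_sq (k * (x - L / 2))
    simp only [tan_eq_sin_div_cos]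
    generalize k * (x - L / 2) = t at hc hs ⊢
    field_simp
    linear_combination hs
  have hGd : ∀ x ∈ Set.Icc 0 L, HasDerivAt (fun r => r * (ψ r) ^ 2 * w r - (ψ r) ^ 2 / 2)
      ((ψ x) ^ 2 * w x + 2 * x * ψ x * ψ' x * w x + x * (ψ x) ^ 2 * (-k ^ 2 - (w x) ^ 2)
        - ψ x * ψ' x) x := by
    intro x hx
    have h1 := (hderiv x hx).pow 2
    have h := (((hasDerivAt_id x).mul h1).mul (hwd x hx)).sub (h1.div_const 2)
    refine h.congr_deriv ?_
    simp
    ring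
  have hψc : ContinuousOn ψ (Set.Icc 0 L) := fun x hx => (hderiv x hx).continuousAt.continuousWithinAt
  have hwc : ContinuousOn w (Set.Icc 0 L) := fun x hx => (hwd x hx).continuousAt.continuousWithinAt
  have hGi : IntervalIntegrable (fun x => (ψ x) ^ 2 * w x + 2 * x * ψ x * ψ' x * w x
      + x * (ψ x) ^ 2 * (-k ^ 2 - (w x) ^ 2) - ψ x * ψ' x) volume 0 L := by
    apply ContinuousOn.intervalIntegrable
    rw [Set.uIcc_of_le hL.le]
    fun_prop
  have hFTC := intervalIntegral.integral_eq_sub_of_hasDerivAt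
    (fun x hx => hGd x (by rwa [Set.uIcc_of_le hL.le] at hx)) hGi
  have hmono := intervalIntegral.integral_mono_on_of_le_Ioo hL.le hGi hg (by
    intro x hx
    have hx0 : 0 < x := hx.1
    have hsq : 0 ≤ x * (ψ' x + ψ x / (2 * x) - w x * ψ x) ^ 2 := by positivity
    rw [← sub_nonneg]
    refine hsq.trans_eq ?_
    rw [hk]
    field_simp
    ring)
  rw [hFTC] at hmono
  simp only [hψL] at hmono
  have := sq_nonneg (ψ 0)
  simp only [ge_iff_le]
  refine le_trans ?_ hmono
  nlinarith
end

section
/- Let r : [0,∞) → [0,∞) be continuous and strictly increasing, and assume the width function θ ↦ r(θ+2π) − r(θ) is nondecreasing and tends to +∞ as θ → ∞. Let Γ = { (r(θ)·cos θ, r(θ)·sin θ) : θ ≥ 0 } ⊂ ℝ². Then for every R > 0 there exists a point x ∈ ℝ² \ Γ such that the open ball of radius R centered at x is disjoint from Γ; consequently there is a pairwise disjoint family of discs D_n ⊂ ℝ² \ Γ with diameter of D_n equal to n for every n ∈ ℕ. -/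
open Real Filter Metric

lemma spiral_key (r : ℝ → ℝ)
    (hmono : StrictMonoOn r (Set.Ici 0))
    (hnonneg : ∀ θ : ℝ, 0 ≤ θ → 0 ≤ r θ) (T R : ℝ) (hT : 0 ≤ T) (hR : 0 ≤ R)
    (hw : 2 * R ≤ r (T + π) - r T) :
    ∃ x : EuclideanSpace ℝ (Fin 2), R ≤ ‖x‖ ∧ ∀ θ : ℝ, 0 ≤ θ →
      R ≤ dist ((WithLp.equiv 2 (Fin 2 → ℝ)).symm
        ![r θ * Real.cos θ, r θ * Real.sin θ]) x := by
  have hpi := Real.pi_pos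
  have h1 := hnonneg T hT
  obtain ⟨m, hm⟩ : ∃ m, m = (r T + r (T + π)) / 2 := ⟨_, rfl⟩
  have hmR : R ≤ m := by linarith
  refine ⟨(WithLp.equiv 2 (Fin 2 → ℝ)).symm ![m * Real.sin T, - m * Real.cos T], ?_, ?_⟩
  · rw [EuclideanSpace.norm_eq]
    apply Real.le_sqrt_of_sq_le
    simp [Fin.sum_univ_two]
    have e : (m * Real.sin T) ^ 2 + (m * Real.cos T) ^ 2 = m ^ 2 := by
      linear_combination m ^ 2 * Real.sin_sq_add_cos_sq T
    rw [e]
    exact pow_le_pow_left₀ hR hmR 2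
  · intro θ hθ
    rw [EuclideanSpace.dist_eq]
    apply Real.le_sqrt_of_sq_le
    simp [Fin.sum_univ_two, Real.dist_eq]
    have hr := hnonneg θ hθ
    have key : (r θ * Real.cos θ - m * Real.sin T) ^ 2 + (r θ * Real.sin θ + m * Real.cos T) ^ 2
        = r θ ^ 2 + m ^ 2 + 2 * (r θ * m * Real.sin (θ - T)) := by
      rw [Real.sin_sub]
      linear_combination (r θ) ^ 2 * Real.sin_sq_add_cos_sq θ + m ^ 2 * Real.sin_sq_add_cos_sq T
    rw [key]
    have hs := Real.neg_one_le_sin (θ - T)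
    have hrm : 0 ≤ r θ * m := mul_nonneg hr (hR.trans hmR)
    rcases le_total θ T with h | h
    · have : r θ ≤ r T := hmono.monotoneOn hθ hT h
      nlinarith
    rcases le_total θ (T + π) with h' | h'
    · have : 0 ≤ Real.sin (θ - T) :=
        Real.sin_nonneg_of_nonneg_of_le_pi (by linarith) (by linarith)
      nlinarith [mul_nonneg hrm this]
    · have : r (T + π) ≤ r θ :=
        hmono.monotoneOn (Set.mem_Ici.2 (by linarith)) hθ h'
      nlinarith

lemma spiral_key2 (r : ℝ → ℝ)
    (hmono : StrictMonoOn r (Set.Ici 0))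
    (hnonneg : ∀ θ : ℝ, 0 ≤ θ → 0 ≤ r θ)
    (hwidth_div : Tendsto (fun θ : ℝ => r (θ + 2 * π) - r θ) atTop atTop) (R : ℝ) (hR : 0 ≤ R) :
    ∃ x : EuclideanSpace ℝ (Fin 2), R ≤ ‖x‖ ∧ ∀ θ : ℝ, 0 ≤ θ →
      R ≤ dist ((WithLp.equiv 2 (Fin 2 → ℝ)).symm
        ![r θ * Real.cos θ, r θ * Real.sin θ]) x := by
  have hpi := Real.pi_pos
  obtain ⟨T, hw, hT⟩ := ((hwidth_div.eventually_ge_atTop (4 * R)).and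
    (eventually_ge_atTop (0 : ℝ))).exists
  have e : T + 2 * π = T + π + π := by ring
  simp only [e] at hw
  rcases le_total (2 * R) (r (T + π) - r T) with h | h
  · exact spiral_key r hmono hnonneg T R hT hR h
  · exact spiral_key r hmono hnonneg (T + π) R (by linarith) hR (by linarith)


/-- If `r : [0,∞) → [0,∞)` is continuous and strictly increasing with a nondecreasing
width function `θ ↦ r(θ+2π) − r(θ)` tending to `+∞`, and
`Γ = {(r(θ)cos θ, r(θ)sin θ) : θ ≥ 0}`, then for every `R > 0` there is a point whose
open ball of radius `R` misses `Γ`; consequently there is a pairwise disjoint family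
of discs in the complement of `Γ` with the `n`-th disc of diameter `n`. -/
theorem expanding_spiral_large_discs (r : ℝ → ℝ)
    (hcont : ContinuousOn r (Set.Ici 0))
    (hmono : StrictMonoOn r (Set.Ici 0))
    (hnonneg : ∀ θ : ℝ, 0 ≤ θ → 0 ≤ r θ)
    (hwidth_mono : MonotoneOn (fun θ : ℝ => r (θ + 2 * π) - r θ) (Set.Ici 0))
    (hwidth_div : Tendsto (fun θ : ℝ => r (θ + 2 * π) - r θ) atTop atTop)
    (Γ : Set (EuclideanSpace ℝ (Fin 2)))
    (hΓ : Γ = {p : EuclideanSpace ℝ (Fin 2) | ∃ θ : ℝ, 0 ≤ θ ∧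
      p = (WithLp.equiv 2 (Fin 2 → ℝ)).symm ![r θ * Real.cos θ, r θ * Real.sin θ]}) :
    (∀ R : ℝ, 0 < R → ∃ x : EuclideanSpace ℝ (Fin 2), x ∉ Γ ∧
      Metric.ball x R ∩ Γ = ∅) ∧
    ∃ x : ℕ → EuclideanSpace ℝ (Fin 2),
      (Pairwise fun m n : ℕ =>
        Disjoint (Metric.closedBall (x m) ((m : ℝ) / 2))
          (Metric.closedBall (x n) ((n : ℝ) / 2))) ∧
      (∀ n : ℕ, Metric.closedBall (x n) ((n : ℝ) / 2) ∩ Γ = ∅) ∧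
      (∀ n : ℕ, Metric.diam (Metric.closedBall (x n) ((n : ℝ) / 2)) = n) := by
  have H := spiral_key2 r hmono hnonneg hwidth_div
  have H' : ∀ R : ℝ, ∃ x : EuclideanSpace ℝ (Fin 2), 0 ≤ R → R ≤ ‖x‖ ∧
      ∀ p ∈ Γ, R ≤ dist p x := by
    intro R
    by_cases hR : 0 ≤ R
    · obtain ⟨x, hx, hx'⟩ := H R hR
      refine ⟨x, fun _ => ⟨hx, ?_⟩⟩
      rw [hΓ]
      rintro p ⟨θ, hθ, rfl⟩
      exact hx' θ hθ
    · exact ⟨0, fun h => absurd h hR⟩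
  choose f hf using H'
  constructor
  · intro R hR
    obtain ⟨-, h⟩ := hf R hR.le
    refine ⟨f R, fun hx => ?_, ?_⟩
    · have := h _ hx
      rw [dist_self] at this
      linarith
    · rw [Set.eq_empty_iff_forall_notMem]
      rintro p ⟨hp, hpΓ⟩
      exact absurd (h p hpΓ) (not_le.2 hp)
  · let x : ℕ → EuclideanSpace ℝ (Fin 2) :=
      fun n => Nat.rec (f 1) (fun n y => f (‖y‖ + n + 2)) n
    have hx0 : x 0 = f 1 := rfl
    have hxs : ∀ n : ℕ, x (n + 1) = f (‖x n‖ + n + 2) := fun n => rfl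
    have hsucc : ∀ n : ℕ, ‖x n‖ + n + 2 ≤ ‖x (n + 1)‖ ∧ ∀ p ∈ Γ, ‖x n‖ + n + 2 ≤ dist p (x (n+1)) := by
      intro n
      rw [hxs]
      exact hf _ (by positivity)
    have hmon : StrictMono (fun n : ℕ => ‖x n‖ + (n : ℝ) / 2) := by
      apply strictMono_nat_of_lt_succ
      intro n
      have := (hsucc n).1
      push_cast
      linarith
    have hlt : ∀ m n : ℕ, m < n → ‖x m‖ + (m : ℝ) / 2 < ‖x n‖ - (n : ℝ) / 2 := by
      intro m n hmn
      obtain ⟨k, rfl⟩ : ∃ k, n = k + 1 := ⟨n - 1, by omega⟩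
      have h1 : ‖x m‖ + (m : ℝ) / 2 ≤ ‖x k‖ + (k : ℝ) / 2 := hmon.monotone (by omega)
      have := (hsucc k).1
      have : (0 : ℝ) ≤ k := Nat.cast_nonneg k
      push_cast
      linarith
    have hdis : ∀ m n : ℕ, m < n → Disjoint (Metric.closedBall (x m) ((m : ℝ) / 2))
          (Metric.closedBall (x n) ((n : ℝ) / 2)) := by
      intro m n hmn
      apply Metric.closedBall_disjoint_closedBall
      have := hlt m n hmn
      have h2 := norm_sub_norm_le (x n) (x m)
      rw [dist_comm, dist_eq_norm]
      linarith
    refine ⟨x, ?_, ?_, ?_⟩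
    · intro m n hmn
      rcases lt_or_gt_of_ne hmn with h | h
      · exact hdis m n h
      · exact (hdis n m h).symm
    · intro n
      rw [Set.eq_empty_iff_forall_notMem]
      rintro p ⟨hp, hpΓ⟩
      rw [Metric.mem_closedBall] at hp
      cases n with
      | zero =>
        have := (hf 1 zero_le_one).2 p hpΓ
        rw [hx0] at hp
        norm_num at hp
        rw [hp, dist_self] at this
        linarith
      | succ k =>
        have := (hsucc k).2 p hpΓ
        have h0 := norm_nonneg (x k)
        have : (0 : ℝ) ≤ k := Nat.cast_nonneg k
        push_cast at hp
        linarith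
    · intro n
      rw [diam_closedBall_eq _ (by positivity)]
      ring
end

section
/- Let a > 0 and define κ(θ) = (2+θ²)/(a(1+θ²)^{3/2}), κ₁(θ) = κ'(θ)/(a√(1+θ²)), κ₂(θ) = κ₁'(θ)/(a√(1+θ²)), and for u ≥ 0 set V(θ,u) = −κ(θ)²/(4(1−uκ(θ))²) − u·κ₂(θ)/(2(1−uκ(θ))³) − (5/4)·u²·κ₁(θ)²/(1−uκ(θ))⁴. Then for every U > 0 one has, uniformly for u ∈ [0,U], V(θ,u) = −1/(4a²θ²) + O(θ^{-3}) as θ → ∞; i.e. sup_{u∈[0,U]} |V(θ,u) + 1/(4a²θ²)| = O(θ^{-3}). -/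
open Real Filter Asymptotics

/-- For the Archimedean spiral of slope `a > 0` with curvature
`κ(θ) = (2+θ²)/(a(1+θ²)^{3/2})`, arc-length derivatives `κ₁ = κ'/(a√(1+θ²))`,
`κ₂ = κ₁'/(a√(1+θ²))`, and effective potential
`V(θ,u) = −κ²/(4(1−uκ)²) − uκ₂/(2(1−uκ)³) − (5/4)u²κ₁²/(1−uκ)⁴`, for every `U > 0`
one has, uniformly for `u ∈ [0,U]`, `V(θ,u) = −1/(4a²θ²) + O(θ⁻³)` as `θ → ∞`:
`sup_{u∈[0,U]} |V(θ,u) + 1/(4a²θ²)| = O(θ⁻³)`. -/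
theorem effective_potential_asymptotics (a : ℝ) (ha : 0 < a)
    (κ κ₁ κ₂ : ℝ → ℝ) (V : ℝ → ℝ → ℝ)
    (hκ : ∀ θ : ℝ, κ θ = (2 + θ ^ 2) / (a * (1 + θ ^ 2) ^ ((3:ℝ)/2)))
    (hκ₁ : ∀ θ : ℝ, κ₁ θ = deriv κ θ / (a * Real.sqrt (1 + θ ^ 2)))
    (hκ₂ : ∀ θ : ℝ, κ₂ θ = deriv κ₁ θ / (a * Real.sqrt (1 + θ ^ 2)))
    (hV : ∀ θ u : ℝ, V θ u = -(κ θ) ^ 2 / (4 * (1 - u * κ θ) ^ 2)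
      - u * κ₂ θ / (2 * (1 - u * κ θ) ^ 3)
      - 5 / 4 * (u ^ 2 * (κ₁ θ) ^ 2 / (1 - u * κ θ) ^ 4)) :
    ∀ U : ℝ, 0 < U →
      (fun θ : ℝ => ⨆ u ∈ Set.Icc (0:ℝ) U, |V θ u + 1 / (4 * a ^ 2 * θ ^ 2)|)
        =O[atTop] fun θ : ℝ => 1 / θ ^ 3 := by
  have hw : ∀ θ : ℝ, 0 < 1 + θ ^ 2 := fun θ => by positivity
  have hs : ∀ θ : ℝ, 0 < Real.sqrt (1 + θ ^ 2) := fun θ => Real.sqrt_pos.2 (hw θ)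
  have hs2 : ∀ θ : ℝ, Real.sqrt (1 + θ ^ 2) ^ 2 = 1 + θ ^ 2 :=
    fun θ => Real.sq_sqrt (hw θ).le
  have hpow : ∀ θ : ℝ, (1 + θ ^ 2) ^ ((3:ℝ)/2) = Real.sqrt (1 + θ ^ 2) ^ 3 := by
    intro θ
    have h0 := (hw θ).le
    generalize 1 + θ ^ 2 = w at h0 ⊢
    rw [Real.sqrt_eq_rpow, ← Real.rpow_natCast, ← Real.rpow_mul h0]
    norm_num
  have hκ' : ∀ θ : ℝ, κ θ = (2 + θ ^ 2) / (a * Real.sqrt (1 + θ ^ 2) ^ 3) := by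
    intro θ; rw [hκ, hpow]
  have hκf : κ = fun θ => (2 + θ ^ 2) / (a * Real.sqrt (1 + θ ^ 2) ^ 3) := funext hκ'
  have hdw : ∀ θ : ℝ, HasDerivAt (fun x : ℝ => 1 + x ^ 2) (2 * θ) θ := by
    intro θ
    simpa using (hasDerivAt_pow 2 θ).const_add 1
  have hd2 : ∀ θ : ℝ, HasDerivAt (fun x : ℝ => 2 + x ^ 2) (2 * θ) θ := by
    intro θ
    simpa using (hasDerivAt_pow 2 θ).const_add 2
  have hk1 : ∀ θ : ℝ, κ₁ θ = -(θ * (4 + θ ^ 2)) / (a ^ 2 * (1 + θ ^ 2) ^ 3) := by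
    intro θ
    have h1 := (hd2 θ).fun_div ((((hdw θ).sqrt (hw θ).ne').fun_pow 3).const_mul a)
      (mul_pos ha (pow_pos (hs θ) 3)).ne'
    rw [hκ₁, hκf, h1.deriv]
    have e := hs2 θ
    have p := hs θ
    have hx : θ ^ 2 = Real.sqrt (1 + θ ^ 2) ^ 2 - 1 := by rw [e]; ring
    rw [← e]
    generalize Real.sqrt (1 + θ ^ 2) = r at *
    rw [Real.sqrt_sq p.le]
    rw [hx]
    field_simp
    ring
  have hk1f : κ₁ = fun θ => -(θ * (4 + θ ^ 2)) / (a ^ 2 * (1 + θ ^ 2) ^ 3) := funext hk1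
  have hk1d : ∀ θ : ℝ, deriv κ₁ θ =
      (3 * θ ^ 4 + 17 * θ ^ 2 - 4) / (a ^ 2 * (1 + θ ^ 2) ^ 4) := by
    intro θ
    have h4 : HasDerivAt (fun x : ℝ => 4 + x ^ 2) (2 * θ) θ := by
      simpa using (hasDerivAt_pow 2 θ).const_add 4
    have h1 := (((hasDerivAt_id' θ).fun_mul h4).fun_neg).fun_div
      (((hdw θ).fun_pow 3).const_mul (a^2))
      (mul_pos (pow_pos ha 2) (pow_pos (hw θ) 3)).ne'
    rw [hk1f, h1.deriv]
    have := hw θ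
    field_simp
    ring
  intro U hU
  refine IsBigO.of_bound (1/(4*a^2) + 16*U/a^3 + 104*U/a^3 + 320*U^2/a^4) ?_
  filter_upwards [eventually_ge_atTop 1, eventually_ge_atTop (4*U/a)] with θ h1 h2
  have hθ : 0 < θ := by linarith
  have hθs : θ ≤ Real.sqrt (1 + θ ^ 2) := Real.le_sqrt_of_sq_le (by linarith)
  have hw0 := hw θ
  have hs0 := hs θ
  have kpos : 0 < κ θ := by rw [hκ']; positivity
  have kle : κ θ ≤ 2 / (a * θ) := by
    rw [hκ', div_le_div_iff₀ (by positivity) (by positivity)]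
    have : (2 + θ^2) * θ ≤ 2 * Real.sqrt (1 + θ ^ 2) ^ 3 := by
      rw [pow_succ (Real.sqrt (1 + θ ^ 2)) 2, hs2, ← mul_assoc]
      apply mul_le_mul _ hθs hθ.le (by positivity)
      nlinarith
    nlinarith
  have ksq : |κ θ ^ 2 - 1 / (a ^ 2 * θ ^ 2)| ≤ 1 / (a ^ 2 * θ ^ 3) := by
    have e : κ θ ^ 2 - 1 / (a ^ 2 * θ ^ 2)
        = (θ^4 + θ^2 - 1) / (a^2 * θ^2 * (1 + θ^2)^3) := by
      have : κ θ ^ 2 = (2 + θ^2)^2 / (a^2 * (1 + θ^2)^3) := by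
        rw [hκ', div_pow, mul_pow, ← pow_mul, ← hs2, ← pow_mul, hs2]
      rw [this]
      field_simp
      ring
    have hn : 0 ≤ θ^4 + θ^2 - 1 := by nlinarith [sq_nonneg (θ^2)]
    rw [e, abs_of_nonneg (by positivity), div_le_div_iff₀ (by positivity) (by positivity)]
    have : (θ^4 + θ^2 - 1) * θ ≤ (1 + θ^2)^3 := by
      have : θ ≤ 1 + θ^2 := by nlinarith
      calc _ ≤ (1 + θ^2)^2 * (1 + θ^2) :=
            mul_le_mul (by nlinarith) this hθ.le (by positivity)
        _ = _ := by ring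
    have := mul_le_mul_of_nonneg_left this (show 0 ≤ a^2 * θ^2 by positivity)
    linarith
  have k1le : |κ₁ θ| ≤ 4 / (a^2 * θ^3) := by
    rw [hk1, abs_div, abs_neg, abs_of_pos (show 0 < θ * (4 + θ^2) by positivity),
      abs_of_pos (show 0 < a^2 * (1 + θ^2)^3 by positivity),
      div_le_div_iff₀ (by positivity) (by positivity)]
    have : θ * (4 + θ^2) * θ^3 ≤ 4 * (1 + θ^2)^3 := by
      have : 0 < θ^2 := by positivity
      have : 0 < θ^4 := by positivity
      have : 0 < θ^6 := by positivity
      nlinarith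
    nlinarith [mul_le_mul_of_nonneg_left this (show 0 ≤ a^2 by positivity)]
  have k1sq : κ₁ θ ^ 2 ≤ 16 / a^4 * (1 / θ^3) := by
    calc κ₁ θ ^ 2 = |κ₁ θ| ^ 2 := (sq_abs _).symm
      _ ≤ (4 / (a^2 * θ^3))^2 := by gcongr
      _ = 16 / a^4 * (1 / θ^3) * (1 / θ^3) := by field_simp; ring
      _ ≤ 16 / a^4 * (1 / θ^3) * 1 := by
        gcongr
        rw [div_le_one (by positivity)]
        exact one_le_pow₀ h1
      _ = _ := by ring
  have k2le : |κ₂ θ| ≤ 26 / a^3 * (1 / θ^3) := by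
    have hd : |deriv κ₁ θ| ≤ 26 / (a^2 * θ^3) := by
      rw [hk1d]
      rw [abs_div, abs_of_pos (show 0 < a^2 * (1 + θ^2)^4 by positivity),
        div_le_div_iff₀ (by positivity) (by positivity)]
      have hn : |3 * θ ^ 4 + 17 * θ ^ 2 - 4| ≤ 26 * (1+θ^2)^2 := by
        rw [abs_le]; constructor <;> nlinarith [sq_nonneg (θ^2)]
      have h3 : θ^3 ≤ (1 + θ^2)^2 := by
        nlinarith [sq_nonneg (θ^2), sq_nonneg (θ^2 - θ)]
      have := mul_le_mul hn h3 (by positivity) (by positivity)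
      nlinarith [mul_le_mul_of_nonneg_left this (show 0 ≤ a^2 by positivity)]
    rw [hκ₂, abs_div, abs_of_pos (show 0 < a * Real.sqrt (1 + θ^2) by positivity)]
    calc _ ≤ (26 / (a^2 * θ^3)) / (a * 1) := by
          gcongr
          linarith
      _ = _ := by field_simp
  have k3 : κ θ ^ 3 ≤ 8 / a^3 * (1 / θ^3) := by
    calc κ θ ^ 3 ≤ (2 / (a * θ))^3 := by gcongr
      _ = _ := by field_simp; ring
  have hRHS : ‖1 / θ^3‖ = 1 / θ^3 := by
    rw [Real.norm_eq_abs, abs_of_pos (by positivity)]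
  rw [hRHS]
  have hC : 0 ≤ (1/(4*a^2) + 16*U/a^3 + 104*U/a^3 + 320*U^2/a^4) * (1 / θ^3) := by positivity
  rw [Real.norm_eq_abs, abs_of_nonneg (Real.iSup_nonneg fun u =>
    Real.iSup_nonneg fun _ => abs_nonneg _)]
  refine Real.iSup_le (fun u => Real.iSup_le (fun hu => ?_) hC) hC
  obtain ⟨hu0, huU⟩ := hu
  have huk : u * κ θ ≤ 1/2 := by
    calc u * κ θ ≤ U * (2 / (a * θ)) := by gcongr
      _ ≤ 1/2 := by
        rw [div_le_iff₀ ha] at h2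
        rw [mul_div_assoc', div_le_div_iff₀ (by positivity) (by positivity)]
        linarith
  have huk0 : 0 ≤ u * κ θ := by positivity
  rw [hV]
  obtain ⟨D, hD⟩ : ∃ D, D = 1 - u * κ θ := ⟨_, rfl⟩
  rw [← hD]
  have hDl : 1/2 ≤ D := by linarith
  have hDu : D ≤ 1 := by linarith
  have hD0 : 0 < D := by linarith
  have T1 : |κ θ ^ 2 / D^2 - κ θ ^ 2| ≤ 64 * U / a^3 * (1/θ^3) := by
    have e : κ θ ^ 2 / D^2 - κ θ ^ 2 = κ θ ^ 2 * (1 - D) * (1 + D) / D^2 := by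
      field_simp; ring
    have h0 : 0 ≤ 1 - D := by linarith
    rw [e, abs_of_nonneg (by positivity)]
    calc _ ≤ κ θ ^ 2 * (U * κ θ) * 2 / (1/2)^2 := by
          gcongr
          · rw [hD]; nlinarith
          · linarith
      _ = 8 * U * κ θ ^ 3 := by ring
      _ ≤ 8 * U * (8 / a^3 * (1 / θ^3)) := by gcongr
      _ = _ := by ring
  have T2 : |u * κ₂ θ / (2 * D^3)| ≤ 104 * U / a^3 * (1/θ^3) := by
    rw [abs_div, abs_mul, abs_of_nonneg hu0, abs_of_pos (show 0 < 2 * D^3 by positivity)]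
    calc _ ≤ U * (26 / a^3 * (1 / θ^3)) / (2 * (1/2)^3) := by gcongr
      _ = _ := by ring
  have T3 : |5 / 4 * (u^2 * κ₁ θ ^ 2 / D^4)| ≤ 320 * U^2 / a^4 * (1/θ^3) := by
    rw [abs_of_nonneg (by positivity)]
    calc _ ≤ 5 / 4 * (U^2 * (16 / a^4 * (1 / θ^3)) / (1/2)^4) := by gcongr
      _ = _ := by ring
  have e1 : -κ θ ^ 2 / (4 * D^2) = -(1/4) * (κ θ ^ 2 / D^2) := by
    field_simp
  have e2 : 1 / (4 * a^2 * θ^2) = 1/4 * (1 / (a^2 * θ^2)) := by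
    field_simp
  have e3 : 1 / (4 * a^2) * (1 / θ^3) = 1/4 * (1 / (a^2 * θ^3)) := by
    field_simp
  have e4 : (1/(4*a^2) + 16*U/a^3 + 104*U/a^3 + 320*U^2/a^4) * (1 / θ^3)
    = 1/4 * (1 / (a^2 * θ^3)) + 1/4 * (64 * U / a^3 * (1/θ^3)) + 104 * U / a^3 * (1/θ^3)
      + 320 * U^2 / a^4 * (1/θ^3) := by rw [← e3]; ring
  rw [e4, e1, e2]
  rw [abs_le] at *
  constructor <;> linarith [T1.1, T1.2, T2.1, T2.2, T3.1, T3.2, ksq.1, ksq.2]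
end
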